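/- Main comparison theorem: Let T be a rooted tree with no infinite geodesic, no vertex with exactly one successor, and nonempty boundary ∂T; let ℓ be a length function, and let P, Q be fully supported probability measures on ∂T with ℓ(P), ℓ(Q), ℓ_♯(P) < ∞, with finite entropies H(P), H(Q), and with D(P‖Q) absolutely convergent. Assume the local entropy series of p and q are uniformly summable: for every ε > 0 there is M_ε ∈ ℕ such that every interior x admits N_ε(x) ⊆ N(x) with |N_ε(x)| ≤ M_ε, ∑_{y ∈ N(x)\N_ε(x)} φ(p(y|x)) < ε and ∑_{y ∈ N(x)\N_ε(x)} φ(q(y|x)) < ε. Let A = sup{H_q(x)/ℓ(x) : x interior} (assumed finite) and a = inf{H_q(x)/ℓ(x) : x interior}. Then for every ε > 0 (with witness M_ε) and every δ with 0 < δ < 1/2, |H(P)/ℓ(P) − H(Q)/ℓ(Q)| ≤ L·(2ε + M_ε·φ(δ)) + (C·√L/δ)·√(D(P‖Q)/ℓ(P)) + ((A−a)/2)·‖μ_P − μ_Q‖₁, where L = ℓ_♯(P)/ℓ(P), C = 2√2/(e·√(ln 2)), and ‖μ_P − μ_Q‖₁ = ∑_{x interior} |μ_P(x) − μ_Q(x)|.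 -/

import Mathlib

open scoped BigOperators
open Filter

noncomputable section

/-- The entropy function `φ(t) = t·log₂(1/t)` (which vanishes at `t = 0`). -/
def phi (t : ℝ) : ℝ := t * Real.logb 2 (1 / t)

/-- A rooted tree: a set of finite lists over ℕ containing the empty list (the root)
and closed under taking prefixes. -/
def IsTree (T : Set (List ℕ)) : Prop :=
  ([] : List ℕ) ∈ T ∧ ∀ x ∈ T, ∀ y : List ℕ, y <+: x → y ∈ T

/-- The successors of `x` in `T`: one-entry extensions of `x` lying in `T`. -/
def succs (T : Set (List ℕ)) (x : List ℕ) : Set (List ℕ) :=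
  {y | y ∈ T ∧ ∃ n : ℕ, y = x ++ [n]}

/-- `x` is a leaf of `T`. -/
def IsLeaf (T : Set (List ℕ)) (x : List ℕ) : Prop :=
  x ∈ T ∧ succs T x = ∅

/-- The boundary of `T`: its set of leaves. -/
def bdry (T : Set (List ℕ)) : Set (List ℕ) := {x | IsLeaf T x}

/-- The interior of `T`. -/
def intr (T : Set (List ℕ)) : Set (List ℕ) := T \ bdry T

/-- No vertex has exactly one successor. -/
def NoUnary (T : Set (List ℕ)) : Prop :=
  ∀ x ∈ T, ∀ y : List ℕ, succs T x ≠ {y}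

/-- `T` has no infinite geodesic. -/
def NoInfGeo (T : Set (List ℕ)) : Prop :=
  ¬ ∃ ξ : ℕ → ℕ, ∀ n : ℕ, (List.ofFn fun i : Fin n => ξ i) ∈ T

/-- `∂T_x`: the set of leaves having `x` as a prefix. -/
def cone (T : Set (List ℕ)) (x : List ℕ) : Set (List ℕ) :=
  {v | v ∈ bdry T ∧ x <+: v}

/-- `P(∂T_x)`. -/
def mass (T : Set (List ℕ)) (P : List ℕ → ℝ) (x : List ℕ) : ℝ :=
  ∑' v : cone T x, P v

/-- `|x|_ℓ`: the sum of `ℓ(y)` over the proper prefixes `y` of `x`. -/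
def lenWt (ℓ : List ℕ → ℝ) (x : List ℕ) : ℝ :=
  ∑ i ∈ Finset.range x.length, ℓ (x.take i)

/-- Expected length `ℓ(P)`. -/
def expLen (T : Set (List ℕ)) (ℓ P : List ℕ → ℝ) : ℝ :=
  ∑' v : bdry T, lenWt ℓ v * P v

/-- Forward transition probability `p(y|x) = P(∂T_y)/P(∂T_x)`. -/
def fwd (T : Set (List ℕ)) (P : List ℕ → ℝ) (x y : List ℕ) : ℝ :=
  mass T P y / mass T P x

/-- Node-average measure `μ_P(x) = ℓ(x)·P(∂T_x)/ℓ(P)`. -/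
def nodeAvg (T : Set (List ℕ)) (ℓ P : List ℕ → ℝ) (x : List ℕ) : ℝ :=
  ℓ x * mass T P x / expLen T ℓ P

/-- A (fully supported) probability measure on a set `S` of vertices. -/
def IsProbOn (S : Set (List ℕ)) (P : List ℕ → ℝ) : Prop :=
  (∀ v ∈ S, 0 < P v) ∧ HasSum (fun v : S => P v) 1

/-- The local entropy `H_q(x) = ∑_{y∈N(x)} φ(q(y|x))`. -/
def Hloc (T : Set (List ℕ)) (Q : List ℕ → ℝ) (x : List ℕ) : ℝ :=
  ∑' y : succs T x, phi (fwd T Q x y)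

theorem aux_congr {ι : Type*} {f g : ι → ℝ} {a b : ℝ} (h : HasSum f a) (hfg : ∀ i, g i = f i)
    (hab : b = a) : HasSum g b := by
  have : g = f := funext hfg
  rw [this, hab]
  exact h

theorem aux_swap {α β : Type*} (F : α → β → ℝ) (hF : ∀ a b, 0 ≤ F a b) (r : α → ℝ) (s : ℝ)
    (c : β → ℝ) (h1 : ∀ a, HasSum (F a) (r a)) (hr : HasSum r s)
    (h2 : ∀ b, HasSum (fun a => F a b) (c b)) : HasSum c s := by
  have hs : Summable (fun z : α × β => F z.1 z.2) := by
    rw [summable_prod_of_nonneg (fun z => hF z.1 z.2)]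
    refine ⟨fun a => (h1 a).summable, ?_⟩
    have : (fun a => ∑' b, F a b) = r := funext fun a => (h1 a).tsum_eq
    simpa [this] using hr.summable
  obtain ⟨t, ht⟩ := hs
  have e1 : HasSum r t := ht.prod_fiberwise h1
  have ht' : HasSum (fun z : β × α => F z.2 z.1) t := by
    have := (Equiv.prodComm β α).hasSum_iff.mpr ht
    exact this
  have e2 : HasSum c t := ht'.prod_fiberwise h2
  rwa [← hr.unique e1] at e2

theorem aux_mass {T : Set (List ℕ)} {P : List ℕ → ℝ} (hP : IsProbOn (bdry T) P) (x : List ℕ) :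
    HasSum (fun v : bdry T => if x <+: (v : List ℕ) then P v else 0) (mass T P x) := by
  have hs : Summable (fun v : bdry T => if x <+: (v : List ℕ) then P v else 0) := by
    refine Summable.of_nonneg_of_le (fun v => ?_) (fun v => ?_) hP.2.summable
    · split_ifs
      · exact (hP.1 v v.2).le
      · exact le_rfl
    · split_ifs
      · exact le_rfl
      · exact (hP.1 v v.2).le
  let i : cone T x → bdry T := fun v => ⟨v.1, v.2.1⟩
  have hi : Function.Injective i := by
    intro a b h
    apply Subtype.ext
    exact congrArg (fun z : bdry T => z.1) h
  have key : mass T P x = ∑' v : bdry T, if x <+: (v : List ℕ) then P v else 0 := by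
    unfold mass
    rw [← hi.tsum_eq (f := fun v : bdry T => if x <+: (v : List ℕ) then P v else 0)]
    · apply tsum_congr
      intro v
      simp [i, v.2.2]
    · intro v hv
      by_cases h : x <+: (v : List ℕ)
      · exact ⟨⟨v.1, v.2, h⟩, rfl⟩
      · simp [h] at hv
  rw [key]
  exact hs.hasSum

theorem aux_mass_nil {T : Set (List ℕ)} {P : List ℕ → ℝ} (hP : IsProbOn (bdry T) P) :
    mass T P [] = 1 := by
  have := aux_mass hP []
  simp only [List.nil_prefix, if_true] at this
  exact this.unique hP.2

theorem aux_leaf {T : Set (List ℕ)} (hT : IsTree T) {v w : List ℕ} (hv : v ∈ bdry T)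
    (hw : w ∈ T) (h : v <+: w) : w = v := by
  obtain ⟨t, rfl⟩ := h
  cases t with
  | nil => simp
  | cons n t =>
    exfalso
    have : v ++ [n] ∈ succs T v := ⟨hT.2 _ hw _ ⟨t, by simp⟩, n, rfl⟩
    rw [hv.2] at this
    exact this

theorem aux_mass_leaf {T : Set (List ℕ)} (hT : IsTree T) {P : List ℕ → ℝ}
    (hP : IsProbOn (bdry T) P) {v : List ℕ} (hv : v ∈ bdry T) : mass T P v = P v := by
  have := aux_mass hP v
  refine this.unique ?_
  have h2 := hasSum_single (L := SummationFilter.unconditional _) (f := fun w : bdry T => if v <+: (w : List ℕ) then P w else 0) ⟨v, hv⟩ ?_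
  · simpa using h2
  · intro w hw
    have : ¬ v <+: (w : List ℕ) := by
      intro h
      exact hw (Subtype.ext (aux_leaf hT hv w.2.1 h))
    simp [this]

theorem aux_mass_notMem {T : Set (List ℕ)} (hT : IsTree T) {P : List ℕ → ℝ}
    (hP : IsProbOn (bdry T) P) {x : List ℕ} (hx : x ∉ T) : mass T P x = 0 := by
  refine (aux_mass hP x).unique ?_
  have : (fun v : bdry T => if x <+: (v : List ℕ) then P v else 0) = fun _ => 0 := by
    funext v
    rw [if_neg]
    intro h
    exact hx (hT.2 _ v.2.1 _ h)
  rw [this]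
  exact hasSum_zero

theorem aux_exists_leaf {T : Set (List ℕ)} (hT : IsTree T) (hG : NoInfGeo T) {x : List ℕ}
    (hx : x ∈ T) : ∃ v ∈ bdry T, x <+: v := by
  by_contra hcon
  push Not at hcon
  have step : ∀ y : {y : List ℕ // y ∈ T ∧ x <+: y}, ∃ n : ℕ, y.1 ++ [n] ∈ T := by
    intro y
    have h1 : y.1 ∉ bdry T := fun h => hcon _ h y.2.2
    have h2 : succs T y.1 ≠ ∅ := fun h => h1 ⟨y.2.1, h⟩
    obtain ⟨z, hz, n, rfl⟩ := Set.nonempty_iff_ne_empty.mpr h2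
    exact ⟨n, hz⟩
  choose k hk using step
  let nx : {y : List ℕ // y ∈ T ∧ x <+: y} → {y : List ℕ // y ∈ T ∧ x <+: y} :=
    fun y => ⟨y.1 ++ [k y], hk y, y.2.2.trans (List.prefix_append _ _)⟩
  let f : ℕ → {y : List ℕ // y ∈ T ∧ x <+: y} := fun n => nx^[n] ⟨x, hx, List.prefix_rfl⟩
  have fs : ∀ n, (f (n+1)).1 = (f n).1 ++ [k (f n)] := by
    intro n
    simp only [f, Function.iterate_succ_apply']
    rfl
  have flen : ∀ n, n ≤ (f n).1.length := by
    intro n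
    induction n with
    | zero => simp
    | succ n ih => rw [fs]; simp; exact ih
  have fpre : ∀ m n, m ≤ n → (f m).1 <+: (f n).1 := by
    intro m n h
    induction n, h using Nat.le_induction with
    | base => exact List.prefix_rfl
    | succ n _ ih => rw [fs]; exact ih.trans (List.prefix_append _ _)
  apply hG
  refine ⟨fun n => (f (n+1)).1.getD n 0, fun n => ?_⟩
  have : (List.ofFn fun i : Fin n => (f (i+1)).1.getD i 0) = (f n).1.take n := by
    apply List.ext_getElem
    · simp [flen n]
    · intro i h1 h2
      have hi : i < n := by simpa using h1
      have hl : i < (f (i+1)).1.length := flen (i+1)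
      have := (fpre (i+1) n hi).getElem hl
      simp [List.getElem?_eq_getElem hl, this]
  rw [this]
  exact hT.2 _ (f n).2.1 _ (List.take_prefix _ _)

theorem aux_mass_pos {T : Set (List ℕ)} (hT : IsTree T) (hG : NoInfGeo T) {P : List ℕ → ℝ}
    (hP : IsProbOn (bdry T) P) {x : List ℕ} (hx : x ∈ T) : 0 < mass T P x := by
  obtain ⟨v, hv, hxv⟩ := aux_exists_leaf hT hG hx
  have h := aux_mass hP x
  have h2 := le_hasSum (L := SummationFilter.unconditional _) h ⟨v, hv⟩ (fun w _ => by
    split_ifs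
    · exact (hP.1 w w.2).le
    · exact le_rfl)
  simp only [hxv, if_true] at h2
  exact (hP.1 v hv).trans_le h2

theorem aux_mass_succ {T : Set (List ℕ)} (hT : IsTree T) {P : List ℕ → ℝ}
    (hP : IsProbOn (bdry T) P) {x : List ℕ} (hx : x ∈ intr T) :
    HasSum (fun y : succs T x => mass T P y) (mass T P x) := by
  refine aux_swap (fun (v : bdry T) (y : succs T x) => if (y : List ℕ) <+: (v : List ℕ) then P v else 0)
    ?_ _ _ _ ?_ (aux_mass hP x) (fun y => aux_mass hP y)
  · intro v y
    split_ifs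
    · exact (hP.1 v v.2).le
    · exact le_rfl
  · intro v
    by_cases h : x <+: (v : List ℕ)
    · rw [if_pos h]
      obtain ⟨t, ht⟩ := h
      cases t with
      | nil =>
        exfalso
        apply hx.2
        have : (v : List ℕ) = x := by simpa using ht.symm
        rw [← this]
        exact v.2
      | cons n t =>
        have hp : x ++ [n] <+: (v : List ℕ) := ⟨t, by simpa using ht⟩
        have hy : x ++ [n] ∈ succs T x := ⟨hT.2 _ v.2.1 _ hp, n, rfl⟩
        have h2 := hasSum_single (f := fun y : succs T x =>
          if (y : List ℕ) <+: (v : List ℕ) then P v else 0) ⟨x ++ [n], hy⟩ ?_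
        · simpa [hp] using h2
        · rintro ⟨y, hyT, m, rfl⟩ hne
          rw [if_neg]
          intro hpre
          apply hne
          apply Subtype.ext
          exact (List.prefix_of_prefix_length_le hpre hp (by simp)).eq_of_length (by simp)
    · rw [if_neg h]
      have : (fun y : succs T x => if (y : List ℕ) <+: (v : List ℕ) then P v else 0) = fun _ => 0 := by
        funext y
        rw [if_neg]
        intro h'
        obtain ⟨_, n, hn⟩ := y.2
        rw [hn] at h'
        exact h ((List.prefix_append _ _).trans h')
      rw [this]
      exact hasSum_zero

theorem aux_chain {T : Set (List ℕ)} (hT : IsTree T) {P : List ℕ → ℝ}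
    (hP : IsProbOn (bdry T) P) (g : List ℕ → ℝ) (hg : ∀ y ∈ T, y ≠ [] → 0 ≤ g y) (s : ℝ)
    (hs : HasSum (fun v : bdry T => P v * ∑ i ∈ Finset.range (v : List ℕ).length,
      g ((v : List ℕ).take (i+1))) s) :
    HasSum (fun e : (Σ x : intr T, succs T x) => mass T P e.2 * g e.2) s := by
  have h1 : HasSum (fun y : List ℕ => if y ≠ [] then mass T P y * g y else 0) s := by
    refine aux_swap (fun (v : bdry T) (y : List ℕ) =>
      if y ≠ [] then (if y <+: (v : List ℕ) then P v else 0) * g y else 0)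
      ?_ _ _ _ ?_ hs ?_
    · intro v y
      split_ifs with h1 h2
      · exact mul_nonneg (hP.1 v v.2).le (hg _ (hT.2 _ v.2.1 _ h2) h1)
      · simp
      · simp
    · intro v
      have inj : Set.InjOn (fun i => (v : List ℕ).take (i+1)) (Finset.range (v : List ℕ).length) := by
        intro i hi j hj hij
        have := congrArg List.length hij
        simp at this hi hj
        omega
      rw [Finset.mul_sum, ← Finset.sum_image (f := fun y => P v * g y) inj]
      have h2 := hasSum_sum_of_ne_finset_zero (L := SummationFilter.unconditional _) (f := fun y : List ℕ =>
        if y ≠ [] then (if y <+: (v : List ℕ) then P v else 0) * g y else 0)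
        (s := (Finset.range (v : List ℕ).length).image (fun i => (v : List ℕ).take (i+1))) ?_
      · convert h2 using 1
        apply Finset.sum_congr rfl
        intro y hy
        rw [Finset.mem_image] at hy
        obtain ⟨i, hi, rfl⟩ := hy
        rw [Finset.mem_range] at hi
        rw [if_pos, if_pos (List.take_prefix _ _)]
        intro h0
        have hh : ((v : List ℕ).take (i+1)).length = 0 := by rw [h0]; rfl
        rw [List.length_take] at hh
        omega
      · intro y hy
        by_cases h0 : y = []
        · simp [h0]
        · by_cases hpre : y <+: (v : List ℕ)
          · exfalso
            apply hy
            rw [Finset.mem_image]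
            have hl : 0 < y.length := List.length_pos_iff.mpr h0
            refine ⟨y.length - 1, ?_, ?_⟩
            · rw [Finset.mem_range]
              have := hpre.length_le
              omega
            · rw [Nat.sub_add_cancel hl]
              exact (List.prefix_iff_eq_take.mp hpre).symm
          · simp [hpre]
    · intro y
      by_cases h0 : y = []
      · simp only [h0, ne_eq, not_true_eq_false, if_false]
        exact hasSum_zero
      · simp only [ne_eq, h0, not_false_eq_true, if_true]
        exact (aux_mass hP y).mul_right _
  let i : (Σ x : intr T, succs T x) → List ℕ := fun e => e.2.1
  have hi : Function.Injective i := by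
    rintro ⟨⟨x, hx⟩, ⟨y, hy, n, hn⟩⟩ ⟨⟨x', hx'⟩, ⟨y', hy', n', hn'⟩⟩ h
    have h : y = y' := h
    have hxx : x = x' := by
      rw [hn, hn'] at h
      exact (List.append_inj' h rfl).1
    subst hxx
    subst h
    rfl
  have h2 := (hi.hasSum_iff (f := fun y : List ℕ => if y ≠ [] then mass T P y * g y else 0)
    (a := s) ?_).mpr h1
  · convert h2 using 1
    funext e
    obtain ⟨_, n, hn⟩ := e.2.2
    have : i e ≠ [] := by
      change e.2.1 ≠ []
      rw [hn]; simp
    simp [this]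
    simp [i]
  · intro y hy
    by_cases h0 : y = []
    · simp [h0]
    · by_cases hyT : y ∈ T
      · exfalso
        apply hy
        have hd : y.dropLast ++ [y.getLast h0] = y := List.dropLast_append_getLast h0
        have hdT : y.dropLast ∈ T := hT.2 _ hyT _ (List.dropLast_prefix y)
        have hys : y ∈ succs T y.dropLast := ⟨hyT, _, hd.symm⟩
        refine ⟨⟨⟨y.dropLast, hdT, fun hb => ?_⟩, ⟨y, hys⟩⟩, rfl⟩
        rw [hb.2] at hys
        exact hys
      · simp [aux_mass_notMem hT hP hyT]
theorem aux_log (t : ℝ) (ht : 0 < t) : (t-1)*(5*t+1)/(2*t*(t+2)) ≤ Real.log t := by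
  let k : ℝ → ℝ := fun t => Real.log t - (t-1)*(5*t+1)/(2*t*(t+2))
  have hd : ∀ x, 0 < x → HasDerivAt k ((x-1)^3/(x^2*(x+2)^2)) x := by
    intro x hx
    have h1 := Real.hasDerivAt_log hx.ne'
    have h2 : HasDerivAt (fun t : ℝ => (t-1)*(5*t+1)) (1*(5*x+1) + (x-1)*(5*1)) x :=
      ((hasDerivAt_id x).sub_const 1).mul (((hasDerivAt_id x).const_mul 5).add_const 1)
    have h3 : HasDerivAt (fun t : ℝ => 2*t*(t+2)) ((2*1)*(x+2) + (2*x)*1) x :=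
      ((hasDerivAt_id x).const_mul 2).mul ((hasDerivAt_id x).add_const 2)
    have h4 := h1.sub (h2.div h3 (by positivity))
    have e : (x-1)^3/(x^2*(x+2)^2) = x⁻¹ - ((1*(5*x+1) + (x-1)*(5*1)) * (2*x*(x+2)) -
        (x-1)*(5*x+1) * ((2*1)*(x+2) + (2*x)*1)) / (2*x*(x+2))^2 := by
      have : x + 2 ≠ 0 := by positivity
      field_simp
      ring
    rw [e]
    exact h4
  have hk1 : k 1 = 0 := by simp [k]
  suffices 0 ≤ k t by
    have : 0 ≤ Real.log t - (t-1)*(5*t+1)/(2*t*(t+2)) := this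
    linarith
  rw [← hk1]
  rcases le_total 1 t with h | h
  · have : MonotoneOn k (Set.Ici 1) := by
      apply monotoneOn_of_deriv_nonneg (convex_Ici 1)
      · intro x hx
        exact (hd x (lt_of_lt_of_le one_pos hx)).continuousAt.continuousWithinAt
      · intro x hx
        rw [interior_Ici] at hx
        exact (hd x (lt_trans one_pos hx)).differentiableAt.differentiableWithinAt
      · intro x hx
        rw [interior_Ici] at hx
        have hx' : (1:ℝ) < x := hx
        rw [(hd x (by linarith)).deriv]
        have : 0 ≤ x - 1 := by linarith
        positivity
    exact this (Set.mem_Ici.mpr le_rfl) h h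
  · have : AntitoneOn k (Set.Ioc 0 1) := by
      apply antitoneOn_of_deriv_nonpos (convex_Ioc 0 1)
      · intro x hx
        exact (hd x hx.1).continuousAt.continuousWithinAt
      · intro x hx
        rw [interior_Ioc] at hx
        exact (hd x hx.1).differentiableAt.differentiableWithinAt
      · intro x hx
        rw [interior_Ioc] at hx
        rw [(hd x hx.1).deriv]
        have h1 : (x-1)^3 ≤ 0 := by
          have : 0 ≤ 1 - x := by linarith [hx.2]
          have : 0 ≤ (1-x)^3 := by positivity
          nlinarith
        exact div_nonpos_of_nonpos_of_nonneg h1 (by positivity)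
    exact this ⟨ht, h⟩ ⟨one_pos, le_rfl⟩ h

/-- pointwise Pinsker -/
theorem aux_pinsker (p q : ℝ) (hp : 0 < p) (hq : 0 < q) :
    3 * (p-q)^2 ≤ (2*p+4*q) * (p * Real.log (p/q) - p + q) := by
  have h := aux_log (p/q) (by positivity)
  have e : (p/q-1)*(5*(p/q)+1)/(2*(p/q)*(p/q+2)) = (p-q)*(5*p+q)/(p*(2*p+4*q)) := by
    field_simp
    ring
  rw [e, div_le_iff₀ (by positivity)] at h
  nlinarith

theorem aux_phi (t : ℝ) : phi t = - (t * Real.log t) / Real.log 2 := by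
  unfold phi Real.logb
  rw [one_div, Real.log_inv]
  ring

theorem aux_sub (s t : ℝ) (hs : 0 ≤ s) (hst : s ≤ t) (ht : t ≤ 1) :
    -(s * Real.log s) - -(t * Real.log t) ≤ t - s := by
  rcases hs.eq_or_lt with rfl | hs
  · simp
    have := Real.log_nonpos hst ht
    nlinarith
  · have htp : 0 < t := by linarith
    have h1 : Real.log (t/s) ≤ t/s - 1 := Real.log_le_sub_one_of_pos (by positivity)
    rw [Real.log_div htp.ne' hs.ne'] at h1
    have h2 := Real.log_nonpos htp.le ht
    have h3 : s * (Real.log t - Real.log s) ≤ t - s := by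
      calc _ ≤ s * (t/s - 1) := by gcongr
        _ = t - s := by field_simp
    nlinarith

theorem aux_max (t : ℝ) (ht : 0 ≤ t) : -(t * Real.log t) ≤ 1 / Real.exp 1 := by
  rcases ht.eq_or_lt with rfl | ht
  · simp; positivity
  · have h := Real.log_le_sub_one_of_pos (x := 1/(t * Real.exp 1)) (by positivity)
    rw [one_div, Real.log_inv, Real.log_mul ht.ne' (by positivity), Real.log_exp] at h
    have : t * (-Real.log t) ≤ t * (t * Real.exp 1)⁻¹ := by
      gcongr; linarith
    have e : t * (t * Real.exp 1)⁻¹ = 1 / Real.exp 1 := by field_simp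
    linarith

theorem aux_nml (s t : ℝ) (hs : 0 ≤ s) (hst : s ≤ t) (ht : t ≤ 1) :
    -(t * Real.log t) - -(s * Real.log s) ≤ -((t-s) * Real.log (t-s)) := by
  rcases hs.eq_or_lt with rfl | hs
  · simp
  · rcases hst.eq_or_lt with rfl | hst
    · simp
    · have h1 : Real.log s ≤ Real.log t := Real.log_le_log hs hst.le
      have h2 : Real.log (t-s) ≤ Real.log t := Real.log_le_log (by linarith) (by linarith)
      nlinarith

theorem aux_small (u δ : ℝ) (hu : 0 ≤ u) (h : u ≤ δ/2) (hδ0 : 0 < δ) (hδ : δ < 1/2) :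
    -(u * Real.log u) ≤ -(δ * Real.log δ) := by
  -- u log u at u ≤ δ/2 ≤ 1/4
  rcases hu.eq_or_lt with rfl | hu
  · simp
    have := Real.log_nonpos hδ0.le (by linarith)
    nlinarith
  -- tangent at w = δ/2
  have hw : 0 < δ/2 := by positivity
  have h1 : Real.log ((δ/2)/u) ≤ (δ/2)/u - 1 := Real.log_le_sub_one_of_pos (by positivity)
  rw [Real.log_div hw.ne' hu.ne'] at h1
  have h2 : u * (Real.log (δ/2) - Real.log u) ≤ δ/2 - u := by
    calc _ ≤ u * ((δ/2)/u - 1) := by gcongr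
      _ = δ/2 - u := by field_simp
  have h3 : Real.log (δ/2) = Real.log δ - Real.log 2 := Real.log_div hδ0.ne' (by norm_num)
  have h4 : Real.log δ ≤ - Real.log 2 := by
    have := Real.log_le_log hδ0 hδ.le
    rwa [one_div, Real.log_inv] at this
  have h5 := Real.log_two_gt_d9
  -- -u log u ≤ (δ/2 - u) - u log(δ/2) ; (δ/2-u)(1+log (δ/2)) ≤ 0
  have h6 : (δ/2 - u) * (1 + Real.log (δ/2)) ≤ 0 := by
    apply mul_nonpos_of_nonneg_of_nonpos <;> linarith
  have h7 : -(u * Real.log u) ≤ -((δ/2) * Real.log (δ/2)) := by nlinarith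
  refine h7.trans ?_
  rw [h3]
  nlinarith

theorem aux_nml_bound (s t δ : ℝ) (hs : 0 ≤ s) (hst : s ≤ t) (ht : t ≤ 1)
    (hδ0 : 0 < δ) (hδ : δ < 1/2) :
    |(-(s * Real.log s)) - (-(t * Real.log t))| ≤
      -(δ * Real.log δ) + 2 / (Real.exp 1 * δ) * (t - s) := by
  have hlδ : 0 ≤ -(δ * Real.log δ) := by
    have := Real.log_nonpos hδ0.le (by linarith)
    nlinarith
  have he := Real.exp_one_lt_d9
  have hep : 0 < Real.exp 1 := Real.exp_pos 1
  have hK : 1 ≤ 2 / (Real.exp 1 * δ) := by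
    rw [le_div_iff₀ (by positivity)]
    nlinarith
  rw [abs_le]
  constructor
  · rcases le_total (t - s) (δ/2) with h | h
    · have h1 := aux_nml s t hs hst ht
      have h2 := aux_small (t-s) δ (by linarith) h hδ0 hδ
      have : 0 ≤ 2 / (Real.exp 1 * δ) * (t - s) := mul_nonneg (by positivity) (by linarith)
      linarith
    · have h1 := aux_max t (by linarith)
      have h2 : 0 ≤ -(s * Real.log s) := by
        have := Real.log_nonpos hs (by linarith)
        nlinarith
      have h3 : 1 / Real.exp 1 ≤ 2 / (Real.exp 1 * δ) * (t - s) := by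
        calc 1 / Real.exp 1 = 2 / (Real.exp 1 * δ) * (δ/2) := by field_simp
          _ ≤ _ := by gcongr
      linarith
  · have h1 := aux_sub s t hs hst ht
    nlinarith

theorem aux_phi_bound (s t δ : ℝ) (hs : 0 ≤ s) (hs1 : s ≤ 1) (ht0 : 0 ≤ t) (ht : t ≤ 1)
    (hδ0 : 0 < δ) (hδ : δ < 1/2) :
    |phi s - phi t| ≤ phi δ + 2 / (Real.exp 1 * Real.log 2 * δ) * |s - t| := by
  have hl : 0 < Real.log 2 := Real.log_pos (by norm_num)
  have key : ∀ s t : ℝ, 0 ≤ s → s ≤ t → t ≤ 1 →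
      |phi s - phi t| ≤ phi δ + 2 / (Real.exp 1 * Real.log 2 * δ) * (t - s) := by
    intro s t hs hst ht
    have h := aux_nml_bound s t δ hs hst ht hδ0 hδ
    rw [aux_phi, aux_phi, aux_phi, ← sub_div, abs_div, abs_of_pos hl, div_le_iff₀ hl]
    calc _ ≤ _ := h
      _ = _ := by field_simp
  rcases le_total s t with h | h
  · rw [abs_of_nonpos (a := s - t) (by linarith), neg_sub]
    exact key s t hs h ht
  · rw [abs_of_nonneg (a := s - t) (by linarith), abs_sub_comm]
    exact key t s ht0 h hs1

theorem aux_phi_nonneg (t : ℝ) (h0 : 0 ≤ t) (h1 : t ≤ 1) : 0 ≤ phi t := by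
  rw [aux_phi]
  have := Real.log_nonpos h0 h1
  have hl : 0 < Real.log 2 := Real.log_pos (by norm_num)
  apply div_nonneg _ hl.le
  nlinarith
theorem aux_intr_of_prefix {T : Set (List ℕ)} (hT : IsTree T) {v : List ℕ} (hv : v ∈ T) {i : ℕ}
    (hi : i < v.length) : v.take i ∈ intr T := by
  refine ⟨hT.2 _ hv _ (List.take_prefix _ _), fun h => ?_⟩
  have := aux_leaf hT h hv (List.take_prefix _ _)
  have := congrArg List.length this
  simp at this
  omega

theorem aux_dropLast (v : List ℕ) (i : ℕ) (hi : i < v.length) :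
    (v.take (i+1)).dropLast = v.take i := by
  rw [List.dropLast_eq_take, List.take_take]
  congr 1
  simp
  omega

theorem aux_fwd_pos {T : Set (List ℕ)} (hT : IsTree T) (hG : NoInfGeo T) {P : List ℕ → ℝ}
    (hP : IsProbOn (bdry T) P) {x y : List ℕ} (hx : x ∈ T) (hy : y ∈ T) : 0 < fwd T P x y :=
  div_pos (aux_mass_pos hT hG hP hy) (aux_mass_pos hT hG hP hx)

theorem aux_mass_le {T : Set (List ℕ)} {P : List ℕ → ℝ}
    (hP : IsProbOn (bdry T) P) {x y : List ℕ} (h : x <+: y) : mass T P y ≤ mass T P x := by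
  refine hasSum_le (fun v => ?_) (aux_mass hP y) (aux_mass hP x)
  by_cases hy : y <+: (v : List ℕ)
  · rw [if_pos hy, if_pos (h.trans hy)]
  · rw [if_neg hy]
    split_ifs
    · exact (hP.1 v v.2).le
    · exact le_rfl

theorem aux_fwd_le {T : Set (List ℕ)} (hT : IsTree T) (hG : NoInfGeo T) {P : List ℕ → ℝ}
    (hP : IsProbOn (bdry T) P) {x y : List ℕ} (hx : x ∈ T) (h : x <+: y) : fwd T P x y ≤ 1 :=
  (div_le_one (aux_mass_pos hT hG hP hx)).mpr (aux_mass_le hP h)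

theorem aux_chain_log {T : Set (List ℕ)} (hT : IsTree T) (hG : NoInfGeo T) {P Q : List ℕ → ℝ}
    (hP : IsProbOn (bdry T) P) (hQ : IsProbOn (bdry T) Q) (s : ℝ)
    (hs : HasSum (fun v : bdry T => P v * (-Real.log (Q v))) s) :
    HasSum (fun e : (Σ x : intr T, succs T x) =>
      mass T P e.2 * (-Real.log (fwd T Q e.1 e.2))) s := by
  have h := aux_chain hT hP (fun y => -Real.log (fwd T Q y.dropLast y)) ?_ s ?_
  · convert h using 1
    funext e
    obtain ⟨_, n, hn⟩ := e.2.2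
    have : (e.2.1).dropLast = e.1.1 := by rw [hn]; simp
    rw [this]
  · intro y hy _
    have hd := hT.2 _ hy _ (List.dropLast_prefix y)
    have := Real.log_nonpos (aux_fwd_pos hT hG hQ hd hy).le
      (aux_fwd_le hT hG hQ hd (List.dropLast_prefix y))
    linarith
  · convert hs using 1
    funext v
    congr 1
    have hv : (v : List ℕ) ∈ T := v.2.1
    have : ∀ i ∈ Finset.range (v : List ℕ).length,
        -Real.log (fwd T Q ((v : List ℕ).take (i+1)).dropLast ((v : List ℕ).take (i+1))) =
        (fun j => -Real.log (mass T Q ((v : List ℕ).take j))) (i+1) -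
        (fun j => -Real.log (mass T Q ((v : List ℕ).take j))) i := by
      intro i hi
      rw [Finset.mem_range] at hi
      rw [aux_dropLast _ _ hi]
      unfold fwd
      rw [Real.log_div (aux_mass_pos hT hG hQ (hT.2 _ hv _ (List.take_prefix _ _))).ne'
        (aux_mass_pos hT hG hQ (hT.2 _ hv _ (List.take_prefix _ _))).ne']
      ring
    rw [Finset.sum_congr rfl this,
      Finset.sum_range_sub (fun j => -Real.log (mass T Q ((v : List ℕ).take j)))]
    simp [aux_mass_nil hQ, aux_mass_leaf hT hQ v.2]

theorem aux_H {T : Set (List ℕ)} (hT : IsTree T) (hG : NoInfGeo T) {P : List ℕ → ℝ}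
    (hP : IsProbOn (bdry T) P) (hs : Summable (fun v : bdry T => phi (P v))) :
    HasSum (fun x : intr T => mass T P x * Hloc T P x) (∑' v : bdry T, phi (P v)) ∧
    ∀ x : intr T, Summable (fun y : succs T x => phi (fwd T P x y)) := by
  have hl : 0 < Real.log 2 := Real.log_pos (by norm_num)
  have h0 : HasSum (fun v : bdry T => P v * (-Real.log (P v)))
      (Real.log 2 * ∑' v : bdry T, phi (P v)) := by
    refine aux_congr (hs.hasSum.mul_left (Real.log 2)) (fun v => ?_) rfl
    rw [aux_phi]
    field_simp
  have h1 := (aux_chain_log hT hG hP hP _ h0).div_const (Real.log 2)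
  rw [mul_div_cancel_left₀ _ hl.ne'] at h1
  have e1 : ∀ (x : intr T) (y : succs T x),
      mass T P y * (-Real.log (fwd T P x y)) / Real.log 2 = mass T P x * phi (fwd T P x y) := by
    intro x y
    have : mass T P y = mass T P x * fwd T P x y := by
      unfold fwd
      rw [mul_div_cancel₀ _ (aux_mass_pos hT hG hP x.2.1).ne']
    rw [this, aux_phi]
    ring
  have h2 : HasSum (fun e : (Σ x : intr T, succs T x) => mass T P e.1 * phi (fwd T P e.1 e.2))
      (∑' v : bdry T, phi (P v)) := by
    refine aux_congr h1 (fun e => ?_) rfl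
    exact (e1 e.1 e.2).symm
  have h3 : ∀ x : intr T, Summable (fun y : succs T x => phi (fwd T P x y)) := by
    intro x
    have := h2.summable.sigma_factor x
    exact (summable_mul_left_iff (aux_mass_pos hT hG hP x.2.1).ne').mp this
  exact ⟨h2.sigma (fun x => (h3 x).hasSum.mul_left _), h3⟩

theorem aux_len {T : Set (List ℕ)} (hT : IsTree T) {P : List ℕ → ℝ}
    (hP : IsProbOn (bdry T) P) (ℓ : List ℕ → ℝ) (hℓ : ∀ x ∈ intr T, 0 ≤ ℓ x)
    (hs : Summable (fun v : bdry T => lenWt ℓ v * P v)) :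
    HasSum (fun x : intr T => ℓ x * mass T P x) (expLen T ℓ P) ∧
    HasSum (fun e : (Σ x : intr T, succs T x) => mass T P e.2 * ℓ e.1) (expLen T ℓ P) := by
  have h := aux_chain hT hP (fun y => ℓ y.dropLast) ?_ (expLen T ℓ P) ?_
  · have h' : HasSum (fun e : (Σ x : intr T, succs T x) => mass T P e.2 * ℓ e.1)
        (expLen T ℓ P) := by
      convert h using 1
      funext e
      obtain ⟨_, n, hn⟩ := e.2.2
      have : (e.2.1).dropLast = e.1.1 := by rw [hn]; simp
      rw [this]
    refine ⟨?_, h'⟩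
    refine h'.sigma (fun x => ?_)
    have := (aux_mass_succ hT hP x.2).mul_right (ℓ x)
    rwa [mul_comm] at this
  · intro y hy h0
    apply hℓ
    have hd := hT.2 _ hy _ (List.dropLast_prefix y)
    refine ⟨hd, fun hb => ?_⟩
    have : y ∈ succs T y.dropLast := ⟨hy, _, (List.dropLast_append_getLast h0).symm⟩
    rw [hb.2] at this
    exact this
  · have := hs.hasSum
    change HasSum _ (expLen T ℓ P) at this
    convert this using 1
    funext v
    rw [mul_comm]
    congr 1
    unfold lenWt
    apply Finset.sum_congr rfl
    intro i hi
    rw [aux_dropLast _ _ (Finset.mem_range.mp hi)]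

theorem aux_fwd_sum {T : Set (List ℕ)} (hT : IsTree T) (hG : NoInfGeo T) {P : List ℕ → ℝ}
    (hP : IsProbOn (bdry T) P) (x : intr T) : HasSum (fun y : succs T x => fwd T P x y) 1 := by
  have := (aux_mass_succ hT hP x.2).div_const (mass T P x)
  rwa [div_self (aux_mass_pos hT hG hP x.2.1).ne'] at this

theorem aux_global {T : Set (List ℕ)} (hT : IsTree T) (hG : NoInfGeo T) {P Q : List ℕ → ℝ}
    (hP : IsProbOn (bdry T) P) (hQ : IsProbOn (bdry T) Q)
    (hlen : Summable fun v : bdry T => lenWt (fun _ => 1) v * P v)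
    (hHP : Summable fun v : bdry T => phi (P v))
    (hD : Summable fun v : bdry T => P v * Real.logb 2 (P v / Q v)) :
    0 ≤ (∑' v : bdry T, P v * Real.logb 2 (P v / Q v)) ∧
    (∀ x : intr T, Summable (fun y : succs T x => |fwd T P x y - fwd T Q x y|)) ∧
    Summable (fun x : intr T => mass T P x * ∑' y : succs T x, |fwd T P x y - fwd T Q x y|) ∧
    (∑' x : intr T, mass T P x * ∑' y : succs T x, |fwd T P x y - fwd T Q x y|) ≤
      Real.sqrt (2 * expLen T (fun _ => 1) P) * Real.sqrt (Real.log 2 *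
        (∑' v : bdry T, P v * Real.logb 2 (P v / Q v))) := by
  have hl : 0 < Real.log 2 := Real.log_pos (by norm_num)
  set S := expLen T (fun _ => 1) P with hS
  set D := ∑' v : bdry T, P v * Real.logb 2 (P v / Q v) with hDdef
  obtain ⟨hL1, hL2⟩ := aux_len hT hP (fun _ => 1) (fun _ _ => zero_le_one) hlen
  have h0 : HasSum (fun v : bdry T => P v * (-Real.log (P v)))
      (Real.log 2 * ∑' v : bdry T, phi (P v)) := by
    refine aux_congr (hHP.hasSum.mul_left (Real.log 2)) (fun v => ?_) rfl
    rw [aux_phi]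
    field_simp
  have h1 : HasSum (fun v : bdry T => P v * (-Real.log (Q v)))
      (Real.log 2 * ∑' v : bdry T, phi (P v) + Real.log 2 * D) := by
    refine aux_congr (h0.add (hD.hasSum.mul_left (Real.log 2))) (fun v => ?_) rfl
    unfold Real.logb
    rw [Real.log_div (hP.1 v v.2).ne' (hQ.1 v v.2).ne']
    field_simp
    ring
  have k0 := aux_chain_log hT hG hP hP _ h0
  have k1 := aux_chain_log hT hG hP hQ _ h1
  have k2 : HasSum (fun e : (Σ x : intr T, succs T x) => mass T P e.1 * fwd T Q e.1 e.2) S := by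
    have hf : ∀ x : intr T, HasSum (fun y : succs T x => mass T P x * fwd T Q x y)
        (1 * mass T P x) := fun x => by
      have := (aux_fwd_sum hT hG hQ x).mul_left (mass T P x)
      rwa [mul_comm] at this
    have hsum : Summable (fun e : (Σ x : intr T, succs T x) => mass T P e.1 * fwd T Q e.1 e.2) := by
      rw [summable_sigma_of_nonneg]
      · refine ⟨fun x => (hf x).summable, ?_⟩
        have : (fun x : intr T => ∑' y : succs T x, mass T P x * fwd T Q x y) =
          fun x : intr T => 1 * mass T P x := funext fun x => (hf x).tsum_eq
        rw [this]
        exact hL1.summable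
      · intro e
        exact mul_nonneg (aux_mass_pos hT hG hP e.1.2.1).le
          (aux_fwd_pos hT hG hQ e.1.2.1 e.2.2.1).le
    obtain ⟨t, ht⟩ := hsum
    have := ht.sigma hf
    rwa [this.unique hL1] at ht
  set w : (Σ x : intr T, succs T x) → ℝ := fun e =>
    mass T P e.1 * (fwd T P e.1 e.2 * Real.log (fwd T P e.1 e.2 / fwd T Q e.1 e.2)
      - fwd T P e.1 e.2 + fwd T Q e.1 e.2) with hw
  set u : (Σ x : intr T, succs T x) → ℝ := fun e =>
    mass T P e.1 * ((2 * fwd T P e.1 e.2 + 4 * fwd T Q e.1 e.2) / 3) with hu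
  have em : ∀ e : (Σ x : intr T, succs T x), mass T P e.2 = mass T P e.1 * fwd T P e.1 e.2 := by
    intro e
    unfold fwd
    rw [mul_div_cancel₀ _ (aux_mass_pos hT hG hP e.1.2.1).ne']
  have fP : ∀ e : (Σ x : intr T, succs T x), 0 < fwd T P e.1 e.2 :=
    fun e => aux_fwd_pos hT hG hP e.1.2.1 e.2.2.1
  have fQ : ∀ e : (Σ x : intr T, succs T x), 0 < fwd T Q e.1 e.2 :=
    fun e => aux_fwd_pos hT hG hQ e.1.2.1 e.2.2.1
  have mP : ∀ e : (Σ x : intr T, succs T x), 0 < mass T P e.1 :=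
    fun e => aux_mass_pos hT hG hP e.1.2.1
  have hwsum : HasSum w (Real.log 2 * D) := by
    have := ((k1.sub k0).sub hL2).add k2
    refine aux_congr this (fun e => ?_) ?_
    · simp only [hw, em e]
      rw [Real.log_div (fP e).ne' (fQ e).ne']
      ring
    · ring
  have husum : HasSum u (2 * S) := by
    have := (((hL2.mul_left 2).add (k2.mul_left 4)).div_const 3)
    refine aux_congr this (fun e => ?_) ?_
    · simp only [hu, em e]
      ring
    · ring
  have pk : ∀ e : (Σ x : intr T, succs T x),
      3 * (fwd T P e.1 e.2 - fwd T Q e.1 e.2)^2 ≤ (2*fwd T P e.1 e.2+4*fwd T Q e.1 e.2) *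
        (fwd T P e.1 e.2 * Real.log (fwd T P e.1 e.2/fwd T Q e.1 e.2) - fwd T P e.1 e.2
          + fwd T Q e.1 e.2) := fun e => aux_pinsker _ _ (fP e) (fQ e)
  have hw0 : ∀ e, 0 ≤ w e := by
    intro e
    apply mul_nonneg (mP e).le
    have h1 := pk e
    have h2 : 0 < 2*fwd T P e.1 e.2+4*fwd T Q e.1 e.2 := by linarith [fP e, fQ e]
    by_contra hneg
    push Not at hneg
    nlinarith [sq_nonneg (fwd T P e.1 e.2 - fwd T Q e.1 e.2)]
  have hu0 : ∀ e, 0 ≤ u e := by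
    intro e
    have := mP e
    have := fP e
    have := fQ e
    simp only [hu]
    positivity
  have hle : ∀ e : (Σ x : intr T, succs T x),
      mass T P e.1 * |fwd T P e.1 e.2 - fwd T Q e.1 e.2| ≤ Real.sqrt (u e) * Real.sqrt (w e) := by
    intro e
    rw [← Real.sqrt_mul (hu0 e)]
    apply Real.le_sqrt_of_sq_le
    rw [mul_pow, sq_abs]
    simp only [hu, hw]
    have := mul_le_mul_of_nonneg_left (pk e) (sq_nonneg (mass T P e.1))
    nlinarith
  have hc := Real.summable_and_inner_le_Lp_mul_Lq_tsum_of_nonneg (p := 2) (q := 2)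
    (f := fun e => Real.sqrt (u e)) (g := fun e => Real.sqrt (w e)) Real.HolderConjugate.two_two
    (fun e => Real.sqrt_nonneg _) (fun e => Real.sqrt_nonneg _) ?_ ?_
  rotate_left
  · convert husum.summable using 1
    funext e
    rw [Real.rpow_two, Real.sq_sqrt (hu0 e)]
  · convert hwsum.summable using 1
    funext e
    rw [Real.rpow_two, Real.sq_sqrt (hw0 e)]
  have eu : (fun e => Real.sqrt (u e) ^ (2:ℝ)) = u := by
    funext e
    rw [Real.rpow_two, Real.sq_sqrt (hu0 e)]
  have ew : (fun e => Real.sqrt (w e) ^ (2:ℝ)) = w := by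
    funext e
    rw [Real.rpow_two, Real.sq_sqrt (hw0 e)]
  rw [eu, ew, husum.tsum_eq, hwsum.tsum_eq, ← Real.sqrt_eq_rpow, ← Real.sqrt_eq_rpow] at hc
  have hs : Summable (fun e : (Σ x : intr T, succs T x) =>
      mass T P e.1 * |fwd T P e.1 e.2 - fwd T Q e.1 e.2|) :=
    Summable.of_nonneg_of_le (fun e => mul_nonneg (mP e).le (abs_nonneg _)) hle hc.1
  have hs3 : ∀ x : intr T, Summable (fun y : succs T x => |fwd T P x y - fwd T Q x y|) := fun x =>
    (summable_mul_left_iff (aux_mass_pos hT hG hP x.2.1).ne').mp (hs.sigma_factor x)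
  have hfin : HasSum (fun x : intr T => mass T P x * ∑' y : succs T x, |fwd T P x y - fwd T Q x y|)
      (∑' e : (Σ x : intr T, succs T x),
      mass T P e.1 * |fwd T P e.1 e.2 - fwd T Q e.1 e.2|) :=
    hs.hasSum.sigma (fun x => (hs3 x).hasSum.mul_left _)
  refine ⟨?_, hs3, hfin.summable, ?_⟩
  · have := hwsum.nonneg hw0
    exact nonneg_of_mul_nonneg_right this hl
  · rw [hfin.tsum_eq]
    exact (hs.tsum_le_tsum hle hc.1).trans hc.2
theorem aux_arith (s1 s2 t1 t2 ε m b : ℝ) (h1 : t1 < ε) (h2 : t2 < ε) (h3 : 0 ≤ t1) (h4 : 0 ≤ t2)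
    (main : |s1 - s2| ≤ m + b) : |(s1 + t1) - (s2 + t2)| ≤ 2 * ε + m + b := by
  rw [abs_le] at main ⊢
  constructor <;> linarith [main.1, main.2]

theorem aux_split (S : Set (List ℕ)) (F : Finset (List ℕ)) :
    ∃ F' : Finset S, F'.card ≤ F.card ∧ ∀ f : List ℕ → ℝ, Summable (fun y : S => f y) →
      ∑' y : S, f y = ∑ y ∈ F', f y + ∑' y : {y : List ℕ // y ∈ S ∧ y ∉ F}, f y := by
  classical
  refine ⟨F.subtype (· ∈ S), ?_, fun f hf => ?_⟩
  · rw [Finset.card_subtype]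
    exact Finset.card_filter_le _ _
  · rw [← hf.sum_add_tsum_subtype_compl (F.subtype (· ∈ S))]
    congr 1
    let eq : {z : S // z ∉ F.subtype (· ∈ S)} ≃ {y : List ℕ // y ∈ S ∧ y ∉ F} :=
      { toFun := fun z => ⟨z.1.1, z.1.2, fun h => z.2 (by simpa using h)⟩
        invFun := fun y => ⟨⟨y.1, y.2.1⟩, fun h => y.2.2 (by simpa using h)⟩
        left_inv := fun z => rfl
        right_inv := fun y => rfl }
    exact eq.tsum_eq (fun y : {y : List ℕ // y ∈ S ∧ y ∉ F} => f y)

theorem aux_local {T : Set (List ℕ)} (hT : IsTree T) (hG : NoInfGeo T) {P Q : List ℕ → ℝ}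
    (hP : IsProbOn (bdry T) P) (hQ : IsProbOn (bdry T) Q) (x : intr T)
    (sP : Summable (fun y : succs T x => phi (fwd T P x y)))
    (sQ : Summable (fun y : succs T x => phi (fwd T Q x y)))
    (sN : Summable (fun y : succs T x => |fwd T P x y - fwd T Q x y|))
    (ε : ℝ) (M : ℕ) (F : Finset (List ℕ)) (hF : F.card ≤ M)
    (h1 : (∑' y : {y : List ℕ // y ∈ succs T x ∧ y ∉ F}, phi (fwd T P x y)) < ε)
    (h2 : (∑' y : {y : List ℕ // y ∈ succs T x ∧ y ∉ F}, phi (fwd T Q x y)) < ε)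
    (δ : ℝ) (hδ0 : 0 < δ) (hδ : δ < 1/2) :
    |Hloc T P x - Hloc T Q x| ≤ 2 * ε + M * phi δ + 2 / (Real.exp 1 * Real.log 2 * δ) *
      ∑' y : succs T x, |fwd T P x y - fwd T Q x y| := by
  obtain ⟨F', hF', hsp⟩ := aux_split (succs T x) F
  have hl : 0 < Real.log 2 := Real.log_pos (by norm_num)
  have eP : Hloc T P x = _ := hsp (fun y => phi (fwd T P x y)) sP
  have eQ : Hloc T Q x = _ := hsp (fun y => phi (fwd T Q x y)) sQ
  rw [eP, eQ]
  have pre : ∀ y ∈ succs T x, (x : List ℕ) <+: y := by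
    rintro y ⟨_, n, rfl⟩
    exact List.prefix_append _ _
  have bd : ∀ {R : List ℕ → ℝ}, IsProbOn (bdry T) R → ∀ y ∈ succs T x,
      0 ≤ fwd T R x y ∧ fwd T R x y ≤ 1 := fun hR y hy =>
    ⟨(aux_fwd_pos hT hG hR x.2.1 hy.1).le, aux_fwd_le hT hG hR x.2.1 (pre y hy)⟩
  have t1 : 0 ≤ ∑' y : {y : List ℕ // y ∈ succs T x ∧ y ∉ F}, phi (fwd T P x y) :=
    tsum_nonneg fun y => aux_phi_nonneg _ (bd hP y y.2.1).1 (bd hP y y.2.1).2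
  have t2 : 0 ≤ ∑' y : {y : List ℕ // y ∈ succs T x ∧ y ∉ F}, phi (fwd T Q x y) :=
    tsum_nonneg fun y => aux_phi_nonneg _ (bd hQ y y.2.1).1 (bd hQ y y.2.1).2
  have hφ : 0 ≤ phi δ := aux_phi_nonneg _ hδ0.le (by linarith)
  have main : |∑ y ∈ F', phi (fwd T P x y) - ∑ y ∈ F', phi (fwd T Q x y)| ≤
      M * phi δ + 2 / (Real.exp 1 * Real.log 2 * δ) *
      ∑' y : succs T x, |fwd T P x y - fwd T Q x y| := by
    rw [← Finset.sum_sub_distrib]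
    calc _ ≤ ∑ y ∈ F', |phi (fwd T P x y) - phi (fwd T Q x y)| := Finset.abs_sum_le_sum_abs _ _
      _ ≤ ∑ y ∈ F', (phi δ + 2 / (Real.exp 1 * Real.log 2 * δ) * |fwd T P x y - fwd T Q x y|) :=
        Finset.sum_le_sum fun y _ => aux_phi_bound _ _ δ (bd hP y y.2).1 (bd hP y y.2).2
          (bd hQ y y.2).1 (bd hQ y y.2).2 hδ0 hδ
      _ = F'.card * phi δ + 2 / (Real.exp 1 * Real.log 2 * δ) *
          ∑ y ∈ F', |fwd T P x y - fwd T Q x y| := by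
        rw [Finset.sum_add_distrib, Finset.mul_sum, Finset.sum_const, nsmul_eq_mul]
      _ ≤ _ := by
        gcongr
        · exact hF'.trans hF
        · exact sN.sum_le_tsum _ (fun y _ => abs_nonneg _)
  exact aux_arith _ _ _ _ _ _ _ h1 h2 t1 t2 main

/-- Main comparison theorem (Theorem `compare`): under the stated finiteness and uniform
summability assumptions, for every `ε > 0` (with witness `M`) and `0 < δ < 1/2`,
`|H(P)/ℓ(P) − H(Q)/ℓ(Q)| ≤ L·(2ε + M·φ(δ)) + (C·√L/δ)·√(D(P‖Q)/ℓ(P))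
  + ((A−a)/2)·‖μ_P − μ_Q‖₁`. -/
theorem main_comparison
    (T : Set (List ℕ)) (hT : IsTree T) (hU : NoUnary T) (hG : NoInfGeo T)
    (hB : (bdry T).Nonempty) (hroot : ([] : List ℕ) ∈ intr T)
    (ℓ : List ℕ → ℝ) (hℓ : ∀ x ∈ intr T, 0 < ℓ x)
    (P Q : List ℕ → ℝ) (hP : IsProbOn (bdry T) P) (hQ : IsProbOn (bdry T) Q)
    (hlenP : Summable fun v : bdry T => lenWt ℓ v * P v)
    (hlenQ : Summable fun v : bdry T => lenWt ℓ v * Q v)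
    (hlenSharpP : Summable fun v : bdry T => ((v : List ℕ).length : ℝ) * P v)
    (hHP : Summable fun v : bdry T => phi (P v))
    (hHQ : Summable fun v : bdry T => phi (Q v))
    (hD : Summable fun v : bdry T => |P v * Real.logb 2 (P v / Q v)|)
    (A a : ℝ)
    (hA : IsLUB {r : ℝ | ∃ x ∈ intr T, r = Hloc T Q x / ℓ x} A)
    (ha : IsGLB {r : ℝ | ∃ x ∈ intr T, r = Hloc T Q x / ℓ x} a)
    (ε : ℝ) (hε : 0 < ε) (M : ℕ)
    (hM : ∀ x ∈ intr T, ∃ F : Finset (List ℕ), ↑F ⊆ succs T x ∧ F.card ≤ M ∧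
      (Summable fun y : {y : List ℕ // y ∈ succs T x ∧ y ∉ F} => phi (fwd T P x y)) ∧
      (∑' y : {y : List ℕ // y ∈ succs T x ∧ y ∉ F}, phi (fwd T P x y)) < ε ∧
      (Summable fun y : {y : List ℕ // y ∈ succs T x ∧ y ∉ F} => phi (fwd T Q x y)) ∧
      (∑' y : {y : List ℕ // y ∈ succs T x ∧ y ∉ F}, phi (fwd T Q x y)) < ε)
    (δ : ℝ) (hδ0 : 0 < δ) (hδ : δ < 1/2) :
    |(∑' v : bdry T, phi (P v)) / expLen T ℓ P
        - (∑' v : bdry T, phi (Q v)) / expLen T ℓ Q|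
      ≤ (expLen T (fun _ => 1) P / expLen T ℓ P) * (2 * ε + M * phi δ)
        + (2 * Real.sqrt 2 / (Real.exp 1 * Real.sqrt (Real.log 2)))
            * Real.sqrt (expLen T (fun _ => 1) P / expLen T ℓ P) / δ
            * Real.sqrt ((∑' v : bdry T, P v * Real.logb 2 (P v / Q v)) / expLen T ℓ P)
        + (A - a) / 2 * ∑' x : intr T, |nodeAvg T ℓ P x - nodeAvg T ℓ Q x| := by
  have hl : 0 < Real.log 2 := Real.log_pos (by norm_num)
  have hlen1 : Summable fun v : bdry T => lenWt (fun _ => 1) v * P v := by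
    simpa [lenWt] using hlenSharpP
  obtain ⟨hHP1, sP⟩ := aux_H hT hG hP hHP
  obtain ⟨hHQ1, sQ⟩ := aux_H hT hG hQ hHQ
  have hLP := (aux_len hT hP ℓ (fun x hx => (hℓ x hx).le) hlenP).1
  have hLQ := (aux_len hT hQ ℓ (fun x hx => (hℓ x hx).le) hlenQ).1
  have hL1 := (aux_len hT hP (fun _ => 1) (fun _ _ => zero_le_one) hlen1).1
  obtain ⟨hD0, sN, sB, hB1⟩ := aux_global hT hG hP hQ hlen1 hHP hD.of_abs
  have pos : ∀ {R : List ℕ → ℝ}, IsProbOn (bdry T) R →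
      HasSum (fun x : intr T => ℓ x * mass T R x) (expLen T ℓ R) → 0 < expLen T ℓ R := by
    intro R hR h
    have h2 := le_hasSum (L := SummationFilter.unconditional _) h ⟨[], hroot⟩ (fun x _ =>
      mul_nonneg (hℓ x x.2).le (aux_mass_pos hT hG hR x.2.1).le)
    refine lt_of_lt_of_le ?_ h2
    exact mul_pos (hℓ _ hroot) (aux_mass_pos hT hG hR hroot.1)
  have hlP := pos hP hLP
  have hlQ := pos hQ hLQ
  set lP := expLen T ℓ P with hlPdef
  set lQ := expLen T ℓ Q with hlQdef
  set S := expLen T (fun _ => 1) P with hSdef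
  set D := ∑' v : bdry T, P v * Real.logb 2 (P v / Q v) with hDdef
  set HP := ∑' v : bdry T, phi (P v) with hHPdef
  set HQ := ∑' v : bdry T, phi (Q v) with hHQdef
  set B := ∑' x : intr T, mass T P x * ∑' y : succs T x, |fwd T P x y - fwd T Q x y| with hBdef
  have mPpos : ∀ x : intr T, 0 < mass T P x := fun x => aux_mass_pos hT hG hP x.2.1
  have rb : ∀ x : intr T, a ≤ Hloc T Q x / ℓ x ∧ Hloc T Q x / ℓ x ≤ A := fun x =>
    ⟨ha.1 ⟨x, x.2, rfl⟩, hA.1 ⟨x, x.2, rfl⟩⟩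
  have Hq0 : ∀ x : intr T, 0 ≤ Hloc T Q x := by
    intro x
    refine tsum_nonneg fun y => ?_
    refine aux_phi_nonneg _ (aux_fwd_pos hT hG hQ x.2.1 y.2.1).le
      (aux_fwd_le hT hG hQ x.2.1 ?_)
    obtain ⟨_, n, hn⟩ := y.2
    rw [hn]
    exact List.prefix_append _ _
  have sX : Summable (fun x : intr T => mass T P x * Hloc T Q x) := by
    refine Summable.of_nonneg_of_le (fun x => mul_nonneg (mPpos x).le (Hq0 x)) (fun x => ?_)
      (hLP.summable.mul_left A)
    have h1 := (rb x).2
    rw [div_le_iff₀ (hℓ x x.2)] at h1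
    have := mul_le_mul_of_nonneg_left h1 (mPpos x).le
    linarith
  obtain ⟨X, hX⟩ := sX
  have hB0 : 0 ≤ B := tsum_nonneg fun x => mul_nonneg (mPpos x).le (tsum_nonneg fun y => abs_nonneg _)
  have hS0 : 0 ≤ S := hL1.nonneg fun x => mul_nonneg zero_le_one (mPpos x).le
  -- first term
  have T1 : |HP - X| ≤ S * (2 * ε + M * phi δ) + 2 / (Real.exp 1 * Real.log 2 * δ) * B := by
    have hd := hHP1.sub hX
    have hb : HasSum (fun x : intr T => 1 * mass T P x * (2 * ε + M * phi δ) +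
        2 / (Real.exp 1 * Real.log 2 * δ) *
          (mass T P x * ∑' y : succs T x, |fwd T P x y - fwd T Q x y|))
        (S * (2 * ε + M * phi δ) + 2 / (Real.exp 1 * Real.log 2 * δ) * B) :=
      (hL1.mul_right _).add (sB.hasSum.mul_left _)
    have hpt : ∀ x : intr T, |mass T P x * Hloc T P x - mass T P x * Hloc T Q x| ≤
        1 * mass T P x * (2 * ε + M * phi δ) +
        2 / (Real.exp 1 * Real.log 2 * δ) *
          (mass T P x * ∑' y : succs T x, |fwd T P x y - fwd T Q x y|) := by
      intro x
      obtain ⟨F, _, hF, _, h1, _, h2⟩ := hM x x.2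
      have := aux_local hT hG hP hQ x (sP x) (sQ x) (sN x) ε M F hF h1 h2 δ hδ0 hδ
      rw [← mul_sub, abs_mul, abs_of_pos (mPpos x)]
      have := mul_le_mul_of_nonneg_left this (mPpos x).le
      refine this.trans (le_of_eq ?_)
      ring
    rw [abs_le]
    constructor
    · exact hasSum_le (fun x => (abs_le.mp (hpt x)).1) hb.neg hd
    · exact hasSum_le (fun x => (abs_le.mp (hpt x)).2) hd hb
  -- second term
  have T2 : |X / lP - HQ / lQ| ≤
      (A - a) / 2 * ∑' x : intr T, |nodeAvg T ℓ P x - nodeAvg T ℓ Q x| := by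
    have n1 : HasSum (fun x : intr T => nodeAvg T ℓ P x) 1 := by
      refine aux_congr (hLP.div_const lP) (fun x => rfl) ?_
      rw [div_self hlP.ne']
    have n2 : HasSum (fun x : intr T => nodeAvg T ℓ Q x) 1 := by
      refine aux_congr (hLQ.div_const lQ) (fun x => rfl) ?_
      rw [div_self hlQ.ne']
    have n3 : HasSum (fun x : intr T => (nodeAvg T ℓ P x - nodeAvg T ℓ Q x) *
        (Hloc T Q x / ℓ x - (A + a) / 2)) (X / lP - HQ / lQ) := by
      refine aux_congr (((hX.div_const lP).sub (hHQ1.div_const lQ)).sub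
        ((n1.sub n2).mul_right ((A + a) / 2))) (fun x => ?_) (by ring)
      have := (hℓ x x.2).ne'
      simp only [nodeAvg, ← hlPdef, ← hlQdef]
      field_simp
    have n4 : HasSum (fun x : intr T => (A - a) / 2 * |nodeAvg T ℓ P x - nodeAvg T ℓ Q x|)
        ((A - a) / 2 * ∑' x : intr T, |nodeAvg T ℓ P x - nodeAvg T ℓ Q x|) :=
      (n1.summable.sub n2.summable).abs.hasSum.mul_left _
    have hpt : ∀ x : intr T, |(nodeAvg T ℓ P x - nodeAvg T ℓ Q x) *
        (Hloc T Q x / ℓ x - (A + a) / 2)| ≤ (A - a) / 2 * |nodeAvg T ℓ P x - nodeAvg T ℓ Q x| := by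
      intro x
      rw [abs_mul, mul_comm]
      gcongr
      rw [abs_le]
      constructor <;> linarith [(rb x).1, (rb x).2]
    rw [abs_le]
    constructor
    · exact hasSum_le (fun x => (abs_le.mp (hpt x)).1) n4.neg n3
    · exact hasSum_le (fun x => (abs_le.mp (hpt x)).2) n3 n4
  -- combine
  have T3 : |HP / lP - HQ / lQ| ≤ |HP - X| / lP + |X / lP - HQ / lQ| := by
    have e : HP / lP - HQ / lQ = (HP - X) / lP + (X / lP - HQ / lQ) := by ring
    rw [e]
    refine (abs_add_le _ _).trans ?_
    rw [abs_div, abs_of_pos hlP]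
  have T4 : |HP - X| / lP ≤ (S / lP) * (2 * ε + M * phi δ) +
      (2 * Real.sqrt 2 / (Real.exp 1 * Real.sqrt (Real.log 2)))
            * Real.sqrt (S / lP) / δ * Real.sqrt (D / lP) := by
    have e1 : Real.sqrt (2 * S) * Real.sqrt (Real.log 2 * D) =
        Real.sqrt 2 * Real.sqrt (Real.log 2) * (Real.sqrt (S / lP) * Real.sqrt (D / lP)) * lP := by
      rw [Real.sqrt_mul (by norm_num), Real.sqrt_mul hl.le, Real.sqrt_div hS0, Real.sqrt_div hD0]
      have h1 : Real.sqrt lP * Real.sqrt lP = lP := Real.mul_self_sqrt hlP.le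
      have h2 : 0 < Real.sqrt lP := Real.sqrt_pos.mpr hlP
      field_simp
      rw [sq, h1]
    rw [div_le_iff₀ hlP]
    refine T1.trans ?_
    have h3 : 2 / (Real.exp 1 * Real.log 2 * δ) * B ≤ 2 / (Real.exp 1 * Real.log 2 * δ) *
        (Real.sqrt 2 * Real.sqrt (Real.log 2) * (Real.sqrt (S / lP) * Real.sqrt (D / lP)) * lP) := by
      rw [← e1]
      gcongr
    have h4 : 2 / (Real.exp 1 * Real.log 2 * δ) *
        (Real.sqrt 2 * Real.sqrt (Real.log 2) * (Real.sqrt (S / lP) * Real.sqrt (D / lP)) * lP) =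
        (2 * Real.sqrt 2 / (Real.exp 1 * Real.sqrt (Real.log 2)))
            * Real.sqrt (S / lP) / δ * Real.sqrt (D / lP) * lP := by
      have h5 : Real.log 2 = Real.sqrt (Real.log 2) * Real.sqrt (Real.log 2) :=
        (Real.mul_self_sqrt hl.le).symm
      have h6 : 0 < Real.sqrt (Real.log 2) := Real.sqrt_pos.mpr hl
      generalize Real.sqrt (S / lP) = z1
      generalize Real.sqrt (D / lP) = z2
      generalize Real.sqrt (Real.log 2) = r at h5 h6 ⊢
      rw [h5]
      field_simp
    have h7 : S / lP * (2 * ε + M * phi δ) * lP = S * (2 * ε + M * phi δ) := by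
      field_simp
    rw [add_mul, h7, ← h4]
    linarith
  linarith
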